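/- If the height of J^{0}(M) (the minimal height of a prime ideal of R containing J^{0}(M)) equals d ≥ 0, then rad(J^{0}(M)) = rad(J^{-1}(M)) = ⋯ = rad(J^{-d}(M)) and rad(J^{-d}(M)) ≠ rad(J^{-d-1}(M)); equivalently V^{0}(M) = V^{-1}(M) = ⋯ = V^{-d}(M) ≠ V^{-d-1}(M). -/

import Mathlib

/-!
Context: `R` is a Noetherian Cohen–Macaulay integral domain and `M` is a nonzero finitely
generated `R`-module with a finite free resolution
`0 → F^{-l} → ⋯ → F^{-1} → F^{0} → M → 0`.
We encode the resolution by the ranks `r i` of the free modules `F^{-i}` (with `r i = 0` for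
`i > l`) and by matrices `D i` representing the differentials `∂^{-(i+1)} : F^{-(i+1)} → F^{-i}`
(so for `i ≥ 1` the differential `∂^{-i}` is the matrix `D (i-1)`), together with a surjection
`π : F^0 → M` with `ker π = im ∂^{-1}` and exactness `ker ∂^{-(i+1)} = im ∂^{-(i+2)}`
for all `i ≥ 0`.
-/

/-- The ideal of `R` generated by all `k × k` minors of the matrix `A`.  For `k = 0` this is the
unit ideal, and it is the zero ideal when `k` exceeds the number of rows or columns. -/
noncomputable def minorsIdeal {R : Type*} [CommRing R] {m n : Type*} [Fintype m] [Fintype n]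
    (k : ℕ) (A : Matrix m n R) : Ideal R :=
  Ideal.span {x : R | ∃ (f : Fin k → m) (g : Fin k → n), x = (A.submatrix f g).det}

/-- The rank of a matrix over a domain: the largest `k` such that some `k × k` minor of `A`
is nonzero. -/
noncomputable def detRank {R : Type*} [CommRing R] {m n : Type*} [Fintype m] [Fintype n]
    (A : Matrix m n R) : ℕ :=
  sSup {k : ℕ | minorsIdeal k A ≠ ⊥}

/-- The determinantal (fitting-type) ideal `I_{rank A}(A)` of a matrix `A`; applied to the matrix
of `∂^{-i}` it gives the degree `-i` fitting ideal `I^{-i}(M)`. -/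
noncomputable def fittingIdealOf {R : Type*} [CommRing R] {m n : Type*} [Fintype m] [Fintype n]
    (A : Matrix m n R) : Ideal R :=
  minorsIdeal (detRank A) A

/-- The degree `-i` jumping ideal `J^{-i}(M) = I_{rank F^{-i}}(∂^{-i-1} ⊕ ∂^{-i})` of a free
resolution with ranks `r i = rank F^{-i}` and differentials `D i = ∂^{-(i+1)}`.
For `i = 0` the map `∂^0` is zero and `F^1 = 0`, so the block matrix of `∂^{-1} ⊕ ∂^0` has the
same minors of size `r 0` as the matrix of `∂^{-1}` alone. -/
noncomputable def jumpIdeal {R : Type*} [CommRing R] (r : ℕ → ℕ)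
    (D : ∀ i : ℕ, Matrix (Fin (r i)) (Fin (r (i + 1))) R) : ℕ → Ideal R
  | 0 => minorsIdeal (r 0) (D 0)
  | (i + 1) => minorsIdeal (r (i + 1)) (Matrix.fromBlocks (D (i + 1)) 0 0 (D i))

/-- The height (codimension) of an ideal: the infimum of `Order.height` (in the prime spectrum
ordered by inclusion) over all primes containing it. -/
noncomputable def idealHeight (R : Type*) [CommRing R] (I : Ideal R) : ℕ∞ :=
  ⨅ (p : PrimeSpectrum R) (_ : I ≤ p.asIdeal), Order.height p

/-- The depth (grade) of an ideal `I` of `R`: the supremum of the lengths of regular sequences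
on `R` consisting of elements of `I`. -/
noncomputable def idealDepth (R : Type*) [CommRing R] (I : Ideal R) : ℕ∞ :=
  sSup {n : ℕ∞ | ∃ rs : List R, (rs.length : ℕ∞) = n ∧ (∀ x ∈ rs, x ∈ I) ∧
    RingTheory.Sequence.IsRegular R rs}

/-- A Noetherian ring is Cohen–Macaulay if and only if for every proper ideal its depth (grade)
equals its height (codimension); we take this characterization as the definition. -/
def IsCohenMacaulayRing (R : Type*) [CommRing R] : Prop :=
  ∀ I : Ideal R, I ≠ ⊤ → idealDepth R I = idealHeight R I

/-!
Let `F` be the resolution. A prime `p` fails to contain `J^{-k}` (`k ≥ 1`) exactly when `F ⊗ κ(p)`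
is exact in degree `-k`; equivalently (`SplitAt`), there are maps `a`, `b` over `R` for which the endomorphism
`∂ a + b ∂` of `F^{-k}` has determinant outside `p` (`not_minorsIdeal_le_iff_splitAt`). By the
Cayley–Hamilton theorem this yields a weak inverse `h` of the outgoing differential up to a scalar:
`∂ h ∂ = c ∂` with `c ∉ p` (`SplitAt.exists_weak_inverse`), so localization is never needed.

Elements of `J^0` annihilate `M`, hence act null-homotopically on `F`, and therefore have a power in
every `J^{-k}` (`exists_null_homotopy`). Conversely, the Cohen–Macaulay hypothesis provides a
regular sequence of length `d` in `J^0`, so `Ext^i(M, R) = 0` for `i < d`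
(`isCoboundary_of_lt_length`). If `J^{-k} ⊄ p` for some `1 ≤ k ≤ d`, the weak inverse in degree `-k`
is carried along the exact complex `Hom(F, R)` down to degree `0`, where it puts a power of `c ∉ p`
in `J^0` (`pow_mem_jumpIdeal_zero`). Hence the radicals agree for `k ≤ d`.

For the strictness, take a prime `P ⊇ J^0` of height `d` and the same regular sequence `x`. By the
Cohen–Macaulay hypothesis `P` is minimal over `(x)`, hence associated to `R/(x)`, so `R/P` embeds in
`R/(x)` (`exists_mul_mem_ofList_iff`). As `Tor_i(M, R/(x)) = 0` for `i > d`
(`exists_sub_mem_of_mulVec_mem`), splitting at `P` descends from degree `-k-1` to degree `-k` for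
`k > d` (`SplitAt.descend`). It holds beyond the length of the resolution, hence in degree `-d-1`,
so `P` contains `J^{-d}` but not `J^{-d-1}`.
-/

/-! ### Minors and splitting -/

section MatrixLemmas

variable {R : Type*} [CommRing R]

lemma det_mul_mem_span {n : Type*} [Fintype n] {k : ℕ}
    (X : Matrix (Fin k) n R) (Q : Matrix n (Fin k) R) :
    (X * Q).det ∈ Ideal.span {x : R | ∃ g : Fin k → n, x = (X.submatrix id g).det} := by
  classical
  have h1 : (X * Q).det = Matrix.detRowAlternating (fun i => ∑ j, Q j i • X.transpose j) := by
    rw [← Matrix.det_transpose]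
    change Matrix.det _ = Matrix.det _
    congr 1
    ext i j
    simp [Matrix.mul_apply, Finset.sum_apply, mul_comm]
  rw [h1, ← AlternatingMap.coe_multilinearMap, MultilinearMap.map_sum]
  refine Ideal.sum_mem _ fun g _ => ?_
  rw [MultilinearMap.map_smul_univ, smul_eq_mul]
  refine Ideal.mul_mem_left _ _ (Ideal.subset_span ⟨g, ?_⟩)
  rw [← Matrix.det_transpose (X.submatrix id g)]
  rfl

/-- The ideal of `k × k` minors of `X` contains the determinant of every `k × k` matrix that
factors through `X`; this is the qualitative content of the Cauchy–Binet formula. -/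
lemma det_mul_mul_mem_minorsIdeal {m n : Type*} [Fintype m] [Fintype n] {k : ℕ}
    (P : Matrix (Fin k) m R) (X : Matrix m n R) (Q : Matrix n (Fin k) R) :
    (P * X * Q).det ∈ minorsIdeal k X := by
  classical
  rw [Matrix.mul_assoc, ← Matrix.det_transpose, Matrix.transpose_mul]
  refine (Ideal.span_le.mpr ?_) (det_mul_mem_span _ _)
  rintro _ ⟨f, rfl⟩
  rw [← Matrix.det_transpose]
  have h2 : ((X * Q).transpose.submatrix id f).transpose = X.submatrix f id * Q := by
    ext i j
    simp [Matrix.mul_apply, mul_comm]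
  rw [h2]
  refine (Ideal.span_mono ?_) (det_mul_mem_span _ _)
  rintro _ ⟨g, rfl⟩
  exact ⟨f, g, by simp⟩

lemma submatrix_eq_mul_mul {m n : Type*} [Fintype m] [Fintype n] [DecidableEq m] [DecidableEq n]
    {k : ℕ} (X : Matrix m n R) (f : Fin k → m) (g : Fin k → n) :
    X.submatrix f g = (1 : Matrix m m R).submatrix f id * X * (1 : Matrix n n R).submatrix id g := by
  ext i j
  simp [Matrix.mul_apply, Matrix.one_apply]

lemma exists_eq_mul_of_ker_le {m n q o : Type*} [Fintype n] [Fintype q] [Fintype o]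
    {A : Matrix m n R} {B : Matrix n q R}
    (h : LinearMap.ker A.mulVecLin ≤ LinearMap.range B.mulVecLin)
    (X : Matrix n o R) (hX : A * X = 0) : ∃ Y : Matrix q o R, X = B * Y := by
  have : ∀ j : o, ∃ y : q → R, B.mulVec y = fun i => X i j := by
    intro j
    have hj : (fun i => X i j) ∈ LinearMap.ker A.mulVecLin := by
      rw [LinearMap.mem_ker]
      ext i
      exact congrFun (congrFun hX i) j
    exact h hj
  choose y hy using this
  refine ⟨fun i j => y j i, ?_⟩
  ext i j
  exact (congrFun (hy j) i).symm

/-- An element `x` of the ideal of `m × m` minors of `A`, with `m` the number of rows, kills the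
cokernel of `A`: the adjugates provide a right inverse of `A` up to `x`. -/
lemma exists_smul_one_eq_mul_of_mem_minorsIdeal {m : ℕ} {n : Type*} [Fintype n]
    (A : Matrix (Fin m) n R) {x : R} (hx : x ∈ minorsIdeal m A) :
    ∃ h : Matrix n (Fin m) R, x • (1 : Matrix (Fin m) (Fin m) R) = A * h := by
  classical
  induction hx using Submodule.span_induction with
  | mem x hx =>
    obtain ⟨f, g, rfl⟩ := hx
    set P := (1 : Matrix (Fin m) (Fin m) R).submatrix f id
    set Q := (1 : Matrix n n R).submatrix id g
    refine ⟨P.det • (Q * (A * Q).adjugate), ?_⟩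
    rw [submatrix_eq_mul_mul, Matrix.mul_assoc, Matrix.det_mul, Matrix.mul_smul,
      ← Matrix.mul_assoc, Matrix.mul_adjugate, smul_smul]
  | zero => exact ⟨0, by simp⟩
  | add x y _ _ hx hy =>
    obtain ⟨a, ha⟩ := hx
    obtain ⟨b, hb⟩ := hy
    exact ⟨a + b, by rw [add_smul, ha, hb, Matrix.mul_add]⟩
  | smul c x _ hx =>
    obtain ⟨a, ha⟩ := hx
    exact ⟨c • a, by rw [smul_eq_mul, mul_smul, ha, Matrix.mul_smul]⟩

/-- For maps `B : Rᵠ → Rⁿ` and `A : Rⁿ → Rᵐ`, an endomorphism of `Rⁿ` of the form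
`B a + b A` has its determinant in the ideal of `n × n` minors of `B ⊕ A`. -/
lemma det_homotopy_mem {m n q : ℕ} (A : Matrix (Fin m) (Fin n) R) (B : Matrix (Fin n) (Fin q) R)
    (a : Matrix (Fin q) (Fin n) R) (b : Matrix (Fin n) (Fin m) R) :
    (B * a + b * A).det ∈ minorsIdeal n (Matrix.fromBlocks B 0 0 A) := by
  have := det_mul_mul_mem_minorsIdeal (Matrix.fromCols 1 b) (Matrix.fromBlocks B 0 0 A)
    (Matrix.fromRows a 1)
  simpa [Matrix.fromCols_mul_fromBlocks, Matrix.fromCols_mul_fromRows] using this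

lemma matrix_rank_add_le {K : Type*} [Field K] {m n : ℕ} (A B : Matrix (Fin m) (Fin n) K) :
    (A + B).rank ≤ A.rank + B.rank := by
  unfold Matrix.rank
  rw [Matrix.mulVecLin_add]
  exact (Submodule.finrank_mono (LinearMap.range_add_le _ _)).trans
    (Submodule.finrank_add_le_finrank_add_finrank _ _)

/-- Over a field, the nonvanishing of an `n × n` minor of `B ⊕ A` forces
`n ≤ rank A + rank B`, hence exactness at the middle term. -/
lemma ker_le_range_of_minor_ne_zero {K : Type*} [Field K] {m n q : ℕ}
    (A : Matrix (Fin m) (Fin n) K) (B : Matrix (Fin n) (Fin q) K) (hAB : A * B = 0)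
    (f : Fin n → Fin n ⊕ Fin m) (g : Fin n → Fin q ⊕ Fin n)
    (hdet : ((Matrix.fromBlocks B 0 0 A).submatrix f g).det ≠ 0) :
    LinearMap.ker A.mulVecLin ≤ LinearMap.range B.mulVecLin := by
  rw [submatrix_eq_mul_mul] at hdet
  set P := (1 : Matrix (Fin n ⊕ Fin m) (Fin n ⊕ Fin m) K).submatrix f id
  set Q := (1 : Matrix (Fin q ⊕ Fin n) (Fin q ⊕ Fin n) K).submatrix id g
  have e : P * Matrix.fromBlocks B 0 0 A * Q
      = P.toCols₁ * B * Q.toRows₁ + P.toCols₂ * A * Q.toRows₂ := by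
    have gen : ∀ (P₁ : Matrix (Fin n) (Fin n) K) (P₂ : Matrix (Fin n) (Fin m) K)
        (Q₁ : Matrix (Fin q) (Fin n) K) (Q₂ : Matrix (Fin n) (Fin n) K),
        Matrix.fromCols P₁ P₂ * Matrix.fromBlocks B 0 0 A * Matrix.fromRows Q₁ Q₂
          = P₁ * B * Q₁ + P₂ * A * Q₂ := fun P₁ P₂ Q₁ Q₂ => by
      simp [Matrix.fromCols_mul_fromBlocks, Matrix.fromCols_mul_fromRows]
    rw [← gen, Matrix.fromCols_toCols, Matrix.fromRows_toRows]
  rw [e] at hdet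
  have hrank := Matrix.rank_of_isUnit _ ((Matrix.isUnit_iff_isUnit_det _).mpr hdet.isUnit)
  have hle : n ≤ B.rank + A.rank := by
    have h1 := matrix_rank_add_le (P.toCols₁ * B * Q.toRows₁) (P.toCols₂ * A * Q.toRows₂)
    have h2 : (P.toCols₁ * B * Q.toRows₁).rank ≤ B.rank :=
      (Matrix.rank_mul_le_left _ _).trans (Matrix.rank_mul_le_right _ _)
    have h3 : (P.toCols₂ * A * Q.toRows₂).rank ≤ A.rank :=
      (Matrix.rank_mul_le_left _ _).trans (Matrix.rank_mul_le_right _ _)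
    rw [hrank, Fintype.card_fin] at h1
    omega
  have hsub : LinearMap.range B.mulVecLin ≤ LinearMap.ker A.mulVecLin := by
    rintro _ ⟨v, rfl⟩
    simp [hAB]
  have hrn := LinearMap.finrank_range_add_finrank_ker A.mulVecLin
  rw [Module.finrank_fin_fun] at hrn
  unfold Matrix.rank at hle
  exact (Submodule.eq_of_le_of_finrank_le hsub (by omega)).ge

lemma exists_weak_inverse {K : Type*} [Field K] {m n : ℕ} (A : Matrix (Fin m) (Fin n) K) :
    ∃ b : Matrix (Fin n) (Fin m) K, A * b * A = A := by
  obtain ⟨s, hs⟩ := A.mulVecLin.rangeRestrict.exists_rightInverse_of_surjective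
    (LinearMap.range_rangeRestrict _)
  obtain ⟨g, hg⟩ := s.exists_extend
  refine ⟨LinearMap.toMatrix' g, ?_⟩
  apply Matrix.toLin'.injective
  ext1 j
  ext1
  rw [Matrix.toLin'_mul, Matrix.toLin'_mul, Matrix.toLin'_toMatrix']
  have h1 := LinearMap.congr_fun hg (A.mulVecLin.rangeRestrict (Pi.single j 1))
  have h2 := congrArg Subtype.val
    (LinearMap.congr_fun hs (A.mulVecLin.rangeRestrict (Pi.single j 1)))
  simp only [LinearMap.coe_comp, Function.comp_apply, Submodule.coe_subtype,
    LinearMap.id_coe, id_eq] at h1 h2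
  simp only [LinearMap.coe_comp, Function.comp_apply, LinearMap.coe_single, Matrix.toLin'_apply']
  exact (congrArg A.mulVecLin h1).trans h2

lemma exists_homotopy_of_ker_le {K : Type*} [Field K] {m n q : ℕ}
    {A : Matrix (Fin m) (Fin n) K} {B : Matrix (Fin n) (Fin q) K}
    (h : LinearMap.ker A.mulVecLin ≤ LinearMap.range B.mulVecLin) :
    ∃ (a : Matrix (Fin q) (Fin n) K) (b : Matrix (Fin n) (Fin m) K), B * a + b * A = 1 := by
  obtain ⟨b, hb⟩ := exists_weak_inverse A
  obtain ⟨a, ha⟩ := exists_eq_mul_of_ker_le h (1 - b * A)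
    (by rw [Matrix.mul_sub, Matrix.mul_one, ← Matrix.mul_assoc, hb, sub_self])
  exact ⟨a, b, by rw [← ha]; abel⟩

/-- Finitely many elements of the residue field at `p` have a common denominator outside `p`. -/
lemma exists_common_denominator (p : Ideal R) [p.IsPrime] {ι : Type*} [Finite ι]
    (c : ι → p.ResidueField) :
    ∃ (s : R) (c' : ι → R), s ∉ p ∧
      ∀ i, algebraMap R p.ResidueField (c' i) = algebraMap R p.ResidueField s * c i := by
  obtain ⟨s, hs⟩ := IsLocalization.exist_integer_multiples_of_finite
    (nonZeroDivisors (R ⧸ p)) c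
  choose t ht using hs
  choose c' hc' using fun i => Ideal.Quotient.mk_surjective (t i)
  obtain ⟨s', hs'⟩ := Ideal.Quotient.mk_surjective (s : R ⧸ p)
  have key : ∀ x : R, algebraMap R p.ResidueField x
      = algebraMap (R ⧸ p) p.ResidueField (Ideal.Quotient.mk p x) := fun x => by
    rw [IsScalarTower.algebraMap_apply R (R ⧸ p) p.ResidueField]
    rfl
  refine ⟨s', c', fun h => ?_, fun i => ?_⟩
  · rw [Ideal.Quotient.eq_zero_iff_mem.mpr h] at hs'
    exact nonZeroDivisors.coe_ne_zero s hs'.symm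
  · rw [key, key, hc', ht, hs', Algebra.smul_def]

/-- The complex `Rᵠ → Rⁿ → Rᵐ` given by `B` and `A` is split exact at the middle term
after localization at `p`, up to an endomorphism invertible at `p`. -/
def SplitAt (p : Ideal R) {m n q : ℕ} (A : Matrix (Fin m) (Fin n) R)
    (B : Matrix (Fin n) (Fin q) R) : Prop :=
  ∃ (a : Matrix (Fin q) (Fin n) R) (b : Matrix (Fin n) (Fin m) R), (B * a + b * A).det ∉ p

lemma splitAt_of_ker_le (p : Ideal R) [p.IsPrime] {m n q : ℕ} (A : Matrix (Fin m) (Fin n) R)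
    (B : Matrix (Fin n) (Fin q) R)
    (h : LinearMap.ker (A.map (algebraMap R p.ResidueField)).mulVecLin ≤
      LinearMap.range (B.map (algebraMap R p.ResidueField)).mulVecLin) : SplitAt p A B := by
  obtain ⟨a, b, hab⟩ := exists_homotopy_of_ker_le h
  obtain ⟨s, c, hs, hc⟩ := exists_common_denominator p
    (Sum.elim (fun ij : Fin q × Fin n => a ij.1 ij.2) (fun ij : Fin n × Fin m => b ij.1 ij.2))
  refine ⟨Matrix.of fun i j => c (Sum.inl (i, j)), Matrix.of fun i j => c (Sum.inr (i, j)), ?_⟩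
  rw [← Ideal.algebraMap_residueField_eq_zero, RingHom.map_det, RingHom.mapMatrix_apply,
    Matrix.map_add _ (map_add _), Matrix.map_mul, Matrix.map_mul]
  have ha : (Matrix.of fun i j => c (Sum.inl (i, j))).map (algebraMap R p.ResidueField)
      = algebraMap R p.ResidueField s • a := by
    ext i j
    simp [hc]
  have hb : (Matrix.of fun i j => c (Sum.inr (i, j))).map (algebraMap R p.ResidueField)
      = algebraMap R p.ResidueField s • b := by
    ext i j
    simp [hc]
  rw [ha, hb, Matrix.mul_smul, Matrix.smul_mul, ← smul_add, hab, Matrix.det_smul, Matrix.det_one,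
    mul_one]
  exact pow_ne_zero _ (by rwa [Ne, Ideal.algebraMap_residueField_eq_zero])

/-- A prime does not contain the ideal of `n × n` minors of `B ⊕ A` exactly when the complex is
split exact there. -/
lemma not_minorsIdeal_le_iff_splitAt (p : Ideal R) [p.IsPrime] {m n q : ℕ}
    (A : Matrix (Fin m) (Fin n) R) (B : Matrix (Fin n) (Fin q) R) (hAB : A * B = 0) :
    ¬ minorsIdeal n (Matrix.fromBlocks B 0 0 A) ≤ p ↔ SplitAt p A B := by
  constructor
  · intro h
    obtain ⟨f, g, hfg⟩ : ∃ (f : Fin n → Fin n ⊕ Fin m) (g : Fin n → Fin q ⊕ Fin n),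
        ((Matrix.fromBlocks B 0 0 A).submatrix f g).det ∉ p := by
      by_contra! H
      refine h (Ideal.span_le.mpr ?_)
      rintro _ ⟨f, g, rfl⟩
      exact H f g
    apply splitAt_of_ker_le
    refine ker_le_range_of_minor_ne_zero _ _ ?_ f g ?_
    · rw [← Matrix.map_mul, hAB, Matrix.map_zero _ (map_zero _)]
    · rw [← Ideal.algebraMap_residueField_eq_zero, RingHom.map_det, RingHom.mapMatrix_apply,
        ← Matrix.submatrix_map, Matrix.fromBlocks_map, Matrix.map_zero _ (map_zero _),
        Matrix.map_zero _ (map_zero _)] at hfg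
      exact hfg
  · rintro ⟨a, b, hab⟩ h
    exact hab (h (det_homotopy_mem A B a b))

lemma mul_aeval_eq_aeval_mul {m n : ℕ} (A : Matrix (Fin m) (Fin n) R)
    (U : Matrix (Fin n) (Fin n) R) (W : Matrix (Fin m) (Fin m) R) (h : A * U = W * A)
    (f : Polynomial R) : A * Polynomial.aeval U f = Polynomial.aeval W f * A := by
  have hpow : ∀ k : ℕ, A * U ^ k = W ^ k * A := by
    intro k
    induction k with
    | zero => simp
    | succ k ih =>
      rw [pow_succ, pow_succ, ← Matrix.mul_assoc, ih, Matrix.mul_assoc, h, Matrix.mul_assoc]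
  induction f using Polynomial.induction_on' with
  | add f g hf hg => rw [map_add, map_add, Matrix.mul_add, Matrix.add_mul, hf, hg]
  | monomial k c =>
    rw [Polynomial.aeval_monomial, Polynomial.aeval_monomial, ← Algebra.smul_def,
      ← Algebra.smul_def, Matrix.mul_smul, Matrix.smul_mul, hpow]

/-- If the complex splits at the middle term at `p`, then `A` has a weak inverse up to a
scalar outside `p`. With `U = B a + b A` one has `A U = (A b) A`, and the Cayley–Hamilton theorem
for `U` expresses `det U • A` as `A h A`. -/
lemma SplitAt.exists_weak_inverse {p : Ideal R} [p.IsPrime] {m n q : ℕ}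
    {A : Matrix (Fin m) (Fin n) R} {B : Matrix (Fin n) (Fin q) R} (hs : SplitAt p A B)
    (hAB : A * B = 0) :
    ∃ (h : Matrix (Fin n) (Fin m) R) (c : R), c ∉ p ∧ A * h * A = c • A := by
  obtain ⟨a, b, hab⟩ := hs
  set U := B * a + b * A with hU
  have h1 : A * U = A * b * A := by
    rw [hU, Matrix.mul_add, ← Matrix.mul_assoc, hAB, Matrix.zero_mul, zero_add, Matrix.mul_assoc]
  have h2 := mul_aeval_eq_aeval_mul A U (A * b) h1 U.charpoly
  rw [Matrix.aeval_self_charpoly, Matrix.mul_zero, ← Polynomial.X_mul_divX_add U.charpoly, map_add,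
    map_mul, Polynomial.aeval_X, Polynomial.aeval_C, Matrix.add_mul,
    Algebra.algebraMap_eq_smul_one, Matrix.smul_mul, Matrix.one_mul] at h2
  refine ⟨-(b * Polynomial.aeval (A * b) U.charpoly.divX), U.charpoly.coeff 0, fun hc => hab ?_, ?_⟩
  · rw [Matrix.det_eq_sign_charpoly_coeff]
    exact Ideal.mul_mem_left _ _ hc
  · rw [Matrix.mul_neg, Matrix.neg_mul, ← Matrix.mul_assoc]
    exact (eq_neg_of_add_eq_zero_right h2.symm).symm

end MatrixLemmas

/-! ### Regular sequences and the resolution -/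

section Complexes

universe u

variable {R : Type u} [CommRing R] {r : ℕ → ℕ}
  {D : ∀ i : ℕ, Matrix (Fin (r i)) (Fin (r (i + 1))) R}

lemma mul_succ_eq_zero (hexact : ∀ i : ℕ, LinearMap.ker (Matrix.mulVecLin (D i)) =
    LinearMap.range (Matrix.mulVecLin (D (i + 1)))) (i : ℕ) : D i * D (i + 1) = 0 := by
  apply Matrix.toLin'.injective
  rw [Matrix.toLin'_mul, map_zero]
  exact LinearMap.range_le_ker_iff.mp (hexact i).ge

/-- Every element of `J⁰` annihilates the module, so multiplication by it is null-homotopic on the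
resolution. -/
lemma exists_null_homotopy (hexact : ∀ i : ℕ, LinearMap.ker (Matrix.mulVecLin (D i)) =
    LinearMap.range (Matrix.mulVecLin (D (i + 1)))) {x : R} (hx : x ∈ jumpIdeal r D 0) (i : ℕ) :
    ∃ (a : Matrix (Fin (r (i + 2))) (Fin (r (i + 1))) R)
      (b : Matrix (Fin (r (i + 1))) (Fin (r i)) R),
      x • (1 : Matrix (Fin (r (i + 1))) (Fin (r (i + 1))) R) = D (i + 1) * a + b * D i := by
  have step : ∀ (i : ℕ) (b : Matrix (Fin (r (i + 1))) (Fin (r i)) R), D i * b * D i = x • D i →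
      ∃ a : Matrix (Fin (r (i + 2))) (Fin (r (i + 1))) R,
        x • (1 : Matrix (Fin (r (i + 1))) (Fin (r (i + 1))) R) = D (i + 1) * a + b * D i := by
    intro i b hb
    obtain ⟨a, ha⟩ := exists_eq_mul_of_ker_le (hexact i).le
      (x • (1 : Matrix (Fin (r (i + 1))) (Fin (r (i + 1))) R) - b * D i)
      (by rw [Matrix.mul_sub, Matrix.mul_smul, Matrix.mul_one, ← Matrix.mul_assoc, hb, sub_self])
    exact ⟨a, by rw [← ha]; abel⟩
  have key : ∃ b : Matrix (Fin (r (i + 1))) (Fin (r i)) R, D i * b * D i = x • D i := by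
    induction i with
    | zero =>
      obtain ⟨h, hh⟩ := exists_smul_one_eq_mul_of_mem_minorsIdeal (D 0) hx
      exact ⟨h, by rw [← hh, Matrix.smul_mul, Matrix.one_mul]⟩
    | succ i ih =>
      obtain ⟨b, hb⟩ := ih
      obtain ⟨a, ha⟩ := step i b hb
      refine ⟨a, ?_⟩
      rw [eq_sub_of_add_eq ha.symm, Matrix.sub_mul, Matrix.smul_mul, Matrix.one_mul,
        Matrix.mul_assoc b, mul_succ_eq_zero hexact, Matrix.mul_zero, sub_zero]
  obtain ⟨b, hb⟩ := key
  obtain ⟨a, ha⟩ := step i b hb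
  exact ⟨a, b, ha⟩

variable (D) in
/-- `φ : F_i → N` is a coboundary of the complex `Hom(F, N)`. -/
def IsCoboundary {N : Type u} [AddCommGroup N] [Module R N] :
    (i : ℕ) → ((Fin (r i) → R) →ₗ[R] N) → Prop
  | 0, φ => φ = 0
  | i + 1, φ => ∃ ψ : (Fin (r i) → R) →ₗ[R] N, φ = ψ ∘ₗ (D i).mulVecLin

open scoped Pointwise in
/-- Vanishing of `Ext^i(M, N)` for `i` smaller than the length of a weakly `N`-regular sequence
of elements of `J⁰`. -/
theorem isCoboundary_of_lt_length (hexact : ∀ i : ℕ, LinearMap.ker (Matrix.mulVecLin (D i)) =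
    LinearMap.range (Matrix.mulVecLin (D (i + 1)))) (rs : List R)
    (hrs : ∀ x ∈ rs, x ∈ jumpIdeal r D 0) :
    ∀ (N : Type u) [AddCommGroup N] [Module R N], RingTheory.Sequence.IsWeaklyRegular N rs →
      ∀ i < rs.length, ∀ φ : (Fin (r i) → R) →ₗ[R] N, φ ∘ₗ (D i).mulVecLin = 0 →
        IsCoboundary D i φ := by
  induction rs with
  | nil =>
    intro N _ _ _ i hi
    simp at hi
  | cons x rs ih =>
    intro N _ _ hreg i hi φ hφ
    obtain ⟨hx, hrest⟩ := (RingTheory.Sequence.isWeaklyRegular_cons_iff N x rs).mp hreg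
    have hxJ := hrs x (by simp)
    cases i with
    | zero =>
      obtain ⟨h, hh⟩ := exists_smul_one_eq_mul_of_mem_minorsIdeal (D 0) hxJ
      change φ = 0
      refine LinearMap.ext fun v => hx ?_
      have h1 : x • v = (D 0).mulVecLin (h.mulVec v) := by
        rw [Matrix.mulVecLin_apply, Matrix.mulVec_mulVec, ← hh, Matrix.smul_mulVec,
          Matrix.one_mulVec]
      change x • φ v = x • (0 : N)
      rw [← map_smul, h1, smul_zero]
      exact LinearMap.congr_fun hφ (h.mulVec v)
    | succ j =>
      obtain ⟨a, b, hab⟩ := exists_null_homotopy hexact hxJ j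
      set ω : (Fin (r j) → R) →ₗ[R] N := φ ∘ₗ b.mulVecLin with hω
      have h1 : x • φ = ω ∘ₗ (D j).mulVecLin := by
        refine LinearMap.ext fun v => ?_
        have h2 : x • v = (D (j + 1)).mulVecLin (a.mulVec v) + b.mulVec ((D j).mulVec v) := by
          rw [Matrix.mulVecLin_apply, Matrix.mulVec_mulVec, Matrix.mulVec_mulVec,
            ← Matrix.add_mulVec, ← hab, Matrix.smul_mulVec, Matrix.one_mulVec]
        rw [LinearMap.smul_apply, ← map_smul, h2, map_add]
        have h3 := LinearMap.congr_fun hφ (a.mulVec v)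
        simp only [LinearMap.coe_comp, Function.comp_apply, LinearMap.zero_apply] at h3
        rw [h3, zero_add]
        rfl
      set q : N →ₗ[R] QuotSMulTop x N := (x • (⊤ : Submodule R N)).mkQ with hq
      have hqker : ∀ y : N, q y = 0 ↔ ∃ z : N, x • z = y := by
        intro y
        rw [hq, Submodule.mkQ_apply, Submodule.Quotient.mk_eq_zero,
          Submodule.mem_smul_pointwise_iff_exists]
        simp
      have h4 : (q ∘ₗ ω) ∘ₗ (D j).mulVecLin = 0 := by
        rw [LinearMap.comp_assoc, ← h1]
        refine LinearMap.ext fun v => (hqker _).mpr ⟨φ v, rfl⟩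
      have h5 := ih (fun y hy => hrs y (by simp [hy])) (QuotSMulTop x N) hrest j
        (by simpa using hi) _ h4
      obtain ⟨ψ₀, h6, h7⟩ : ∃ ψ₀ : (Fin (r j) → R) →ₗ[R] N,
          ψ₀ ∘ₗ (D j).mulVecLin = 0 ∧ q ∘ₗ ω = q ∘ₗ ψ₀ := by
        cases j with
        | zero =>
          refine ⟨0, LinearMap.zero_comp _, ?_⟩
          rw [LinearMap.comp_zero]
          exact h5
        | succ k =>
          obtain ⟨ψ, hψ⟩ := h5
          obtain ⟨ψ', hψ'⟩ := Module.projective_lifting_property q ψ (Submodule.mkQ_surjective _)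
          refine ⟨ψ' ∘ₗ (D k).mulVecLin, ?_, ?_⟩
          · rw [LinearMap.comp_assoc, ← Matrix.mulVecLin_mul, mul_succ_eq_zero hexact,
              Matrix.mulVecLin_zero, LinearMap.comp_zero]
          · rw [hψ, ← hψ', LinearMap.comp_assoc]
      have h8 : ∀ v, ∃ z : N, x • z = (ω - ψ₀) v := fun v => by
        rw [← hqker, LinearMap.sub_apply, map_sub, sub_eq_zero]
        exact LinearMap.congr_fun h7 v
      obtain ⟨ω', hω'⟩ := Module.projective_lifting_property
        (LinearMap.lsmul R N x).rangeRestrict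
        ((ω - ψ₀).codRestrict (LinearMap.range (LinearMap.lsmul R N x)) h8)
        (LinearMap.surjective_rangeRestrict _)
      have h9 : x • ω' = ω - ψ₀ :=
        LinearMap.ext fun v => congrArg Subtype.val (LinearMap.congr_fun hω' v)
      refine ⟨ω', LinearMap.ext fun v => hx ?_⟩
      have h10 : x • φ = (x • ω') ∘ₗ (D j).mulVecLin := by
        rw [h9, h1, LinearMap.sub_comp, h6, sub_zero]
      exact LinearMap.congr_fun h10 v

lemma eq_zero_of_mul_eq_zero (hexact : ∀ i : ℕ, LinearMap.ker (Matrix.mulVecLin (D i)) =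
    LinearMap.range (Matrix.mulVecLin (D (i + 1)))) {rs : List R}
    (hrs : ∀ x ∈ rs, x ∈ jumpIdeal r D 0) (hreg : RingTheory.Sequence.IsWeaklyRegular R rs)
    (hlen : 0 < rs.length) {q : ℕ} (X : Matrix (Fin q) (Fin (r 0)) R) (hX : X * D 0 = 0) :
    X = 0 := by
  have h : ∀ a, LinearMap.proj a ∘ₗ X.mulVecLin = 0 := fun a =>
    isCoboundary_of_lt_length hexact rs hrs R hreg 0 hlen _
      (by rw [LinearMap.comp_assoc, ← Matrix.mulVecLin_mul, hX, Matrix.mulVecLin_zero,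
        LinearMap.comp_zero])
  apply Matrix.toLin'.injective
  rw [map_zero]
  exact LinearMap.ext fun v => funext fun a => LinearMap.congr_fun (h a) v

lemma exists_eq_mul_of_mul_eq_zero (hexact : ∀ i : ℕ, LinearMap.ker (Matrix.mulVecLin (D i)) =
    LinearMap.range (Matrix.mulVecLin (D (i + 1)))) {rs : List R}
    (hrs : ∀ x ∈ rs, x ∈ jumpIdeal r D 0) (hreg : RingTheory.Sequence.IsWeaklyRegular R rs)
    {i : ℕ} (hlen : i + 1 < rs.length) {q : ℕ} (X : Matrix (Fin q) (Fin (r (i + 1))) R)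
    (hX : X * D (i + 1) = 0) : ∃ Y : Matrix (Fin q) (Fin (r i)) R, X = Y * D i := by
  have h : ∀ a, ∃ ψ : (Fin (r i) → R) →ₗ[R] R,
      LinearMap.proj a ∘ₗ X.mulVecLin = ψ ∘ₗ (D i).mulVecLin := fun a =>
    isCoboundary_of_lt_length hexact rs hrs R hreg (i + 1) hlen _
      (by rw [LinearMap.comp_assoc, ← Matrix.mulVecLin_mul, hX, Matrix.mulVecLin_zero,
        LinearMap.comp_zero])
  choose ψ hψ using h
  refine ⟨LinearMap.toMatrix' (LinearMap.pi ψ), ?_⟩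
  apply Matrix.toLin'.injective
  rw [Matrix.toLin'_mul, Matrix.toLin'_toMatrix']
  exact LinearMap.ext fun v => funext fun a => LinearMap.congr_fun (hψ a) v

/-- A weak inverse of `D j` up to a scalar `c`, with `j` smaller than the length of a regular
sequence in `J⁰`, propagates along the exact dual complex down to a right inverse of `D 0` up to
`c`; hence a power of `c` is in `J⁰`. -/
lemma pow_mem_jumpIdeal_zero (hexact : ∀ i : ℕ, LinearMap.ker (Matrix.mulVecLin (D i)) =
    LinearMap.range (Matrix.mulVecLin (D (i + 1)))) {rs : List R}
    (hrs : ∀ x ∈ rs, x ∈ jumpIdeal r D 0) (hreg : RingTheory.Sequence.IsWeaklyRegular R rs)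
    (c : R) (j : ℕ) (hj : j < rs.length) (h : Matrix (Fin (r (j + 1))) (Fin (r j)) R)
    (hh : D j * h * D j = c • D j) : c ^ r 0 ∈ jumpIdeal r D 0 := by
  induction j with
  | zero =>
    have h1 := eq_zero_of_mul_eq_zero hexact hrs hreg hj
      (c • (1 : Matrix (Fin (r 0)) (Fin (r 0)) R) - D 0 * h)
      (by rw [Matrix.sub_mul, hh, Matrix.smul_mul, Matrix.one_mul, sub_self])
    have h2 := det_mul_mul_mem_minorsIdeal (1 : Matrix (Fin (r 0)) (Fin (r 0)) R) (D 0) h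
    rw [Matrix.one_mul, ← sub_eq_zero.mp h1, Matrix.det_smul, Matrix.det_one, mul_one,
      Fintype.card_fin] at h2
    exact h2
  | succ j ih =>
    obtain ⟨g, hg⟩ := exists_eq_mul_of_mul_eq_zero hexact hrs hreg hj
      (c • (1 : Matrix (Fin (r (j + 1))) (Fin (r (j + 1))) R) - D (j + 1) * h)
      (by rw [Matrix.sub_mul, hh, Matrix.smul_mul, Matrix.one_mul, sub_self])
    refine ih (by omega) g ?_
    rw [Matrix.mul_assoc, ← hg, Matrix.mul_sub, ← Matrix.mul_assoc, mul_succ_eq_zero hexact,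
      Matrix.zero_mul, sub_zero, Matrix.mul_smul, Matrix.mul_one]

lemma mulVec_mem {m n : ℕ} {I : Ideal R} (A : Matrix (Fin m) (Fin n) R) {v : Fin n → R}
    (hv : ∀ a, v a ∈ I) (b : Fin m) : A.mulVec v b ∈ I :=
  Submodule.sum_mem I (t := Finset.univ) (f := fun a => A b a * v a)
    fun a _ => Ideal.mul_mem_left _ _ (hv a)

/-- Vanishing of `Tor_i(M, R/(x₁, …, x_n))` for `i > n` and a weakly regular sequence. -/
theorem exists_sub_mem_of_mulVec_mem (hexact : ∀ i : ℕ, LinearMap.ker (Matrix.mulVecLin (D i)) =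
    LinearMap.range (Matrix.mulVecLin (D (i + 1)))) {rs : List R}
    (hreg : RingTheory.Sequence.IsWeaklyRegular R rs) (n : ℕ) (hn : n ≤ rs.length) :
    ∀ i, n ≤ i → ∀ v : Fin (r (i + 1)) → R,
      (∀ a, (D i).mulVec v a ∈ Ideal.ofList (rs.take n)) →
      ∃ u : Fin (r (i + 2)) → R, ∀ a, (v - (D (i + 1)).mulVec u) a ∈ Ideal.ofList (rs.take n) := by
  induction n with
  | zero =>
    intro i _ v hv
    simp only [List.take_zero, Ideal.ofList_nil, Ideal.mem_bot] at hv ⊢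
    have : v ∈ LinearMap.ker (D i).mulVecLin := by
      rw [LinearMap.mem_ker]
      exact funext hv
    rw [hexact] at this
    obtain ⟨u, rfl⟩ := this
    exact ⟨u, fun a => by simp⟩
  | succ n ih =>
    intro i hi v hv
    obtain ⟨j, rfl⟩ : ∃ j, i = j + 1 := ⟨i - 1, by omega⟩
    have hn' : n < rs.length := by omega
    set I := Ideal.ofList (rs.take n) with hI
    set x := rs[n] with hx
    have hxI : ∀ y : R, x * y ∈ I → y ∈ I := by
      intro y hy
      have h1 := hreg.regular_mod_prev n hn'
      rw [← hI, ← hx, isSMulRegular_quotient_iff_mem_of_smul_mem] at h1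
      simpa using h1 y (by simpa using hy)
    have hsup : Ideal.ofList (rs.take (n + 1)) = I ⊔ Ideal.span {x} := by
      rw [List.take_succ_eq_append_getElem hn', Ideal.ofList_append, Ideal.ofList_singleton]
    rw [hsup] at hv ⊢
    have hdec : ∀ a, ∃ y : R, (D (j + 1)).mulVec v a - x * y ∈ I := by
      intro a
      obtain ⟨s, hs, t, ht, hst⟩ := Submodule.mem_sup.mp (hv a)
      obtain ⟨y, rfl⟩ := Ideal.mem_span_singleton'.mp ht
      exact ⟨y, by rw [← hst, mul_comm y, add_sub_cancel_right]; exact hs⟩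
    choose y hy using hdec
    obtain ⟨z, hz⟩ := ih (by omega) j (by omega) y (by
      intro b
      apply hxI
      have h2 := mulVec_mem (D j) (v := (D (j + 1)).mulVec v - x • y) hy b
      rw [Matrix.mulVec_sub, Matrix.mulVec_mulVec, mul_succ_eq_zero hexact, Matrix.zero_mulVec,
        zero_sub, Matrix.mulVec_smul] at h2
      simpa using h2)
    obtain ⟨u, hu⟩ := ih (by omega) (j + 1) (by omega) (v - x • z) (by
      intro b
      have h3 := I.add_mem (hy b) (I.mul_mem_left x (hz b))
      convert h3 using 1
      rw [Matrix.mulVec_sub, Matrix.mulVec_smul]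
      simp only [Pi.sub_apply, Pi.smul_apply, smul_eq_mul]
      ring)
    refine ⟨u, fun a => ?_⟩
    have h4 : (v - (D (j + 1 + 1)).mulVec u) a = (v - x • z - (D (j + 1 + 1)).mulVec u) a
        + z a * x := by
      simp only [Pi.sub_apply, Pi.smul_apply, smul_eq_mul]
      ring
    rw [h4]
    exact Submodule.add_mem_sup (hu a) (Ideal.mul_mem_left _ _ (Ideal.mem_span_singleton_self x))

/-- If `p` is associated to `R/(x₁, …, x_d)` for a regular sequence, then splitting at `p`
descends along the resolution in homological degrees above `d`: the embedding `R/p → R/(x)` given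
by `w` turns the vanishing of `Tor(M, R/(x))` into exactness modulo `p`. -/
lemma SplitAt.descend (hexact : ∀ i : ℕ, LinearMap.ker (Matrix.mulVecLin (D i)) =
    LinearMap.range (Matrix.mulVecLin (D (i + 1)))) {rs : List R}
    (hreg : RingTheory.Sequence.IsWeaklyRegular R rs) (p : Ideal R) [p.IsPrime] (w : R)
    (hw : ∀ y, y * w ∈ Ideal.ofList rs ↔ y ∈ p) (m : ℕ) (hm : rs.length ≤ m)
    (hs : SplitAt p (D (m + 1)) (D (m + 2))) : SplitAt p (D m) (D (m + 1)) := by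
  obtain ⟨h, c, hc, hch⟩ := hs.exists_weak_inverse (mul_succ_eq_zero hexact _)
  refine splitAt_of_ker_le p _ _ fun v' hv' => ?_
  obtain ⟨s, v, hs', hv⟩ := exists_common_denominator p v'
  set ρ := algebraMap R p.ResidueField with hρ
  have hvv : ρ ∘ v = ρ s • v' := funext hv
  have hp : ∀ a, (D m).mulVec v a ∈ p := by
    intro a
    rw [← Ideal.algebraMap_residueField_eq_zero, ← hρ, RingHom.map_mulVec, hvv, Matrix.mulVec_smul]
    have := congrFun (LinearMap.mem_ker.mp hv') a
    rw [Matrix.mulVecLin_apply] at this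
    rw [Pi.smul_apply, this, Pi.zero_apply, smul_zero]
  obtain ⟨u, hu⟩ := exists_sub_mem_of_mulVec_mem hexact hreg rs.length le_rfl m hm (w • v) (by
    intro a
    rw [List.take_length, Matrix.mulVec_smul, Pi.smul_apply, smul_eq_mul, mul_comm]
    exact (hw _).mpr (hp a))
  rw [List.take_length] at hu
  set g := c • (1 : Matrix (Fin (r (m + 1))) (Fin (r (m + 1))) R) - D (m + 1) * h with hg
  have hgD : g * D (m + 1) = 0 := by
    rw [hg, Matrix.sub_mul, hch, Matrix.smul_mul, Matrix.one_mul, sub_self]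
  have hgv : ∀ a, g.mulVec v a ∈ p := by
    intro a
    have h1 := mulVec_mem g hu a
    rw [Matrix.mulVec_sub, Matrix.mulVec_mulVec, hgD, Matrix.zero_mulVec, sub_zero,
      Matrix.mulVec_smul, Pi.smul_apply, smul_eq_mul, mul_comm] at h1
    exact (hw _).mp h1
  have hcs : ρ c * ρ s ≠ 0 :=
    mul_ne_zero (by rwa [Ne, hρ, Ideal.algebraMap_residueField_eq_zero])
      (by rwa [Ne, hρ, Ideal.algebraMap_residueField_eq_zero])
  refine ⟨(ρ c * ρ s)⁻¹ • (ρ ∘ h.mulVec v), ?_⟩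
  rw [map_smul, inv_smul_eq_iff₀ hcs]
  funext a
  have h2 := Ideal.algebraMap_residueField_eq_zero.mpr (hgv a)
  rw [hg, Matrix.sub_mulVec, Matrix.smul_mulVec, Matrix.one_mulVec, ← Matrix.mulVec_mulVec,
    Pi.sub_apply, map_sub, sub_eq_zero, Pi.smul_apply, smul_eq_mul, map_mul] at h2
  rw [Matrix.mulVecLin_apply, Pi.smul_apply, smul_eq_mul, mul_assoc, ← hv a, h2]
  exact (RingHom.map_mulVec _ _ _ a).symm

end Complexes

/-! ### Height and depth -/

section HeightDepth

variable {R : Type*} [CommRing R]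

lemma idealHeight_top : idealHeight R (⊤ : Ideal R) = ⊤ := by
  simp only [idealHeight, iInf_eq_top]
  intro p hp
  exact absurd (top_le_iff.mp hp) p.isPrime.ne_top

lemma exists_prime_of_idealHeight_eq {I : Ideal R} {d : ℕ} (h : idealHeight R I = d) :
    ∃ P : PrimeSpectrum R, I ≤ P.asIdeal ∧ Order.height P = d := by
  unfold idealHeight at h
  rw [iInf_subtype'] at h
  have hne : Nonempty {P : PrimeSpectrum R // I ≤ P.asIdeal} := by
    by_contra hn
    rw [not_nonempty_iff] at hn
    rw [iInf_of_empty] at h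
    exact (ENat.natCast_lt_top d).ne h.symm
  obtain ⟨P, hP⟩ := ENat.exists_eq_iInf
    (fun P : {P : PrimeSpectrum R // I ≤ P.asIdeal} => Order.height P.1)
  exact ⟨P.1, P.2, hP.trans h⟩

lemma exists_isRegular_of_idealDepth_eq [Nontrivial R] {I : Ideal R} {d : ℕ}
    (h : idealDepth R I = d) :
    ∃ rs : List R, rs.length = d ∧ (∀ x ∈ rs, x ∈ I) ∧ RingTheory.Sequence.IsRegular R rs := by
  unfold idealDepth at h
  set S := {n : ℕ∞ | ∃ rs : List R, (rs.length : ℕ∞) = n ∧ (∀ x ∈ rs, x ∈ I) ∧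
    RingTheory.Sequence.IsRegular R rs} with hS
  have : Nonempty S := ⟨0, [], by simp, by simp, RingTheory.Sequence.IsRegular.nil R R⟩
  have hmem := ENat.sSup_mem_of_nonempty_of_lt_top (s := S) (h ▸ ENat.natCast_lt_top d)
  rw [h] at hmem
  obtain ⟨rs, h1, h2, h3⟩ := hmem
  exact ⟨rs, by exact_mod_cast h1, h2, h3⟩

/-- In a Cohen–Macaulay ring, a prime containing a regular sequence of length equal to its height
is minimal over that sequence, hence associated to the quotient by it. -/
lemma exists_mul_mem_ofList_iff [IsNoetherianRing R] (hCM : IsCohenMacaulayRing R) {rs : List R}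
    (hreg : RingTheory.Sequence.IsRegular R rs) (P : PrimeSpectrum R)
    (hrs : ∀ x ∈ rs, x ∈ P.asIdeal) (hP : Order.height P = rs.length) :
    ∃ w : R, ∀ y, y * w ∈ Ideal.ofList rs ↔ y ∈ P.asIdeal := by
  set I := Ideal.ofList rs with hI
  have hIP : I ≤ P.asIdeal := Ideal.span_le.mpr hrs
  have hIt : I ≠ ⊤ := fun h => P.isPrime.ne_top (top_le_iff.mp (h ▸ hIP))
  have hmem : ∀ x ∈ rs, x ∈ I := fun x hx => Ideal.subset_span hx
  have hht : (rs.length : ℕ∞) ≤ idealHeight R I := by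
    rw [← hCM I hIt]
    exact le_sSup ⟨rs, rfl, hmem, hreg⟩
  have hmin : P.asIdeal ∈ (Module.annihilator R (R ⧸ I)).minimalPrimes := by
    rw [Ideal.annihilator_quotient]
    refine ⟨⟨P.isPrime, hIP⟩, fun q hq hqP => ?_⟩
    by_contra hn
    have hlt : (⟨q, hq.1⟩ : PrimeSpectrum R) < P := lt_of_le_not_ge hqP hn
    have h1 : Order.height (⟨q, hq.1⟩ : PrimeSpectrum R) < rs.length := by
      rw [← hP]
      refine Order.height_strictMono hlt (lt_of_le_of_lt (Order.height_mono hlt.le) ?_)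
      rw [hP]
      exact ENat.natCast_lt_top _
    exact absurd (hht.trans (iInf₂_le (⟨q, hq.1⟩ : PrimeSpectrum R) hq.2)) h1.not_ge
  have hass := Module.associatedPrimes.minimalPrimes_annihilator_subset_associatedPrimes R (R ⧸ I)
    hmin
  obtain ⟨-, x, hx⟩ := isAssociatedPrime_iff.mp hass
  obtain ⟨w, rfl⟩ := Ideal.Quotient.mk_surjective x
  refine ⟨w, fun y => ?_⟩
  rw [hx, Submodule.mem_colon_singleton, Submodule.mem_bot, ← Ideal.Quotient.eq_zero_iff_mem]
  rfl

end HeightDepth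

/-! ### Jumping ideals -/

theorem statement_5
    (R : Type*) [CommRing R] [IsDomain R] [IsNoetherianRing R]
    (hCM : IsCohenMacaulayRing R)
    (M : Type*) [AddCommGroup M] [Module R M] [Nontrivial M]
    (r : ℕ → ℕ) (l : ℕ) (hbd : ∀ i : ℕ, l < i → r i = 0)
    (D : ∀ i : ℕ, Matrix (Fin (r i)) (Fin (r (i + 1))) R)
    (π : (Fin (r 0) → R) →ₗ[R] M) (hπ : Function.Surjective π)
    (hker : LinearMap.ker π = LinearMap.range (Matrix.mulVecLin (D 0)))
    (hexact : ∀ i : ℕ, LinearMap.ker (Matrix.mulVecLin (D i)) =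
      LinearMap.range (Matrix.mulVecLin (D (i + 1)))) :
    ∀ d : ℕ, idealHeight R (jumpIdeal r D 0) = (d : ℕ∞) →
      (∀ k : ℕ, k ≤ d → (jumpIdeal r D k).radical = (jumpIdeal r D 0).radical) ∧
        (jumpIdeal r D d).radical ≠ (jumpIdeal r D (d + 1)).radical := by
  intro d hd
  have hlt : (d : ℕ∞) < ⊤ := ENat.natCast_lt_top d
  have hJ : jumpIdeal r D 0 ≠ ⊤ := by
    intro h
    rw [h, idealHeight_top] at hd
    exact hlt.ne hd.symm
  obtain ⟨rs, hlen, hrs, hreg⟩ := exists_isRegular_of_idealDepth_eq (hCM _ hJ ▸ hd)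
  obtain ⟨P, hJP, hP⟩ := exists_prime_of_idealHeight_eq hd
  have hle : ∀ (p : Ideal R) [p.IsPrime] (k : ℕ), k ≤ d →
      (jumpIdeal r D k ≤ p ↔ jumpIdeal r D 0 ≤ p) := by
    intro p hp k hk
    cases k with
    | zero => rfl
    | succ j =>
      constructor
      · intro h x hx
        obtain ⟨a, b, hab⟩ := exists_null_homotopy hexact hx j
        have h1 := det_homotopy_mem (D j) (D (j + 1)) a b
        rw [← hab, Matrix.det_smul, Matrix.det_one, mul_one] at h1
        exact hp.mem_of_pow_mem _ (h h1)
      · intro h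
        by_contra hn
        obtain ⟨b, c, hc, hbc⟩ := ((not_minorsIdeal_le_iff_splitAt p _ _
          (mul_succ_eq_zero hexact j)).mp hn).exists_weak_inverse (mul_succ_eq_zero hexact j)
        exact hc (hp.mem_of_pow_mem _ (h (pow_mem_jumpIdeal_zero hexact hrs hreg.toIsWeaklyRegular
          c j (by omega) b hbc)))
  refine ⟨fun k hk => ?_, fun hrad => ?_⟩
  · rw [Ideal.radical_eq_sInf, Ideal.radical_eq_sInf]
    congr 1
    ext p
    exact and_congr_left fun hp => @hle p hp k hk
  · have : P.asIdeal.IsPrime := P.isPrime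
    obtain ⟨w, hw⟩ := exists_mul_mem_ofList_iff hCM hreg P (fun x hx => hJP (hrs x hx))
      (by rw [hP, hlen])
    -- Beyond the length of the resolution the minor of size `0` makes the ideal the unit ideal.
    have hsplit : ∀ n m : ℕ, d ≤ m → l < m + 1 + n → SplitAt P.asIdeal (D m) (D (m + 1)) := by
      intro n
      induction n with
      | zero =>
        intro m _ hl
        have : IsEmpty (Fin (r (m + 1))) := by
          rw [hbd (m + 1) hl]
          infer_instance
        refine ⟨0, 0, ?_⟩
        rw [Matrix.det_isEmpty]
        exact fun h => P.isPrime.ne_top ((Ideal.eq_top_iff_one _).mpr h)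
      | succ n ih =>
        intro m hm hl
        exact SplitAt.descend hexact hreg.toIsWeaklyRegular P.asIdeal w hw m (by omega)
          (ih (m + 1) (by omega) (by omega))
    refine (not_minorsIdeal_le_iff_splitAt P.asIdeal _ _ (mul_succ_eq_zero hexact d)).mpr
      (hsplit l d le_rfl (by omega)) ?_
    have h1 := (hle P.asIdeal d le_rfl).mpr hJP
    rw [← P.isPrime.radical_le_iff, hrad, P.isPrime.radical_le_iff] at h1
    exact h1
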